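/- Under the compact nonzero-sum game setup with the quantization condition lim_{δ→0} ω_δ(2δ) = 0 and discount factor β ∈ (0,1): for every ε > 0 there exists δ(ε) > 0 such that for all 0 < δ ≤ δ(ε), any stationary perfect Nash equilibrium π*_δ of the finite δ-model, extended to X via Q_δ, is a stationary perfect ε-Nash equilibrium of the original game; that is, for every player i = 1,…,N and every x ∈ X, J^i(π*_δ; x) ≤ J*(π^{*,-i}_δ; x) + ε, where J*(π^{*,-i}_δ;·) is the discounted best-response value of player i (which equals the infimum over all policies of player i of the β-discounted expected cost against the extended policies π^{*,-i}_δ). -/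

import Mathlib

/-! The value of the finite `δ`-model, extended to `X` along the quantizer, is an approximate fixed
point both of the evaluation operator of the equilibrium profile and of the best-response operator
of each player in the original game; monotonicity and the discount factor turn the error `e` of an
approximate fixed point into a distance of at most `e / (1 - β)` from the true value. The error is
the oscillation of the state-action cost over distances at most `2δ`. It tends to zero uniformly
over the equilibria: the one-stage cost is uniformly continuous, and a function that is constant on
the quantization cells integrates against `p` as it does against the quantized law `p^δ`, so the
total variation modulus `ω_δ(2δ)` controls its expected continuation value.

The comparison needs measurable values in the original game. Nothing of the kind is assumed of the
bounded solutions of the fixed-point equations, whose integrals may even be junk values. Under a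
setwise continuous kernel, however, the integral of any bounded function is of Baire class one in
the state-action pair, so the right-hand sides of these equations are measurable in the state. -/

open MeasureTheory Filter Topology

noncomputable section

/-- Total variation distance between two measures:
`‖μ − ν‖_TV = 2 sup_{D measurable} |μ(D) − ν(D)|`. -/
def tvDist {α : Type*} [MeasurableSpace α] (μ ν : Measure α) : ℝ :=
  2 * ⨆ D : {D : Set α // MeasurableSet D}, |(μ D.1).toReal - (ν D.1).toReal|

/-- The normalized restriction `ν^z_δ` of `ν` to the quantization cell `Q⁻¹{z}`. -/
def cellMeasure {X : Type*} [MeasurableSpace X] (ν : Measure X) (Q : X → X) (z : X) :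
    Measure X :=
  (ν (Q ⁻¹' {z}))⁻¹ • ν.restrict (Q ⁻¹' {z})

theorem abs_integral_le_of_ae_abs_le {α : Type*} [MeasurableSpace α] {μ : Measure α}
    [IsProbabilityMeasure μ] {f : α → ℝ} {K : ℝ} (hf : ∀ᵐ x ∂μ, |f x| ≤ K) : |∫ x, f x ∂μ| ≤ K := by
  simpa using norm_integral_le_of_norm_le_const (f := f) hf

/-- Baire class one with uniformly bounded approximants: `f` is the pointwise limit of a uniformly
bounded sequence of continuous functions. The uniform bound makes the class stable under
integrating out a variable. -/
def IsBoundedBaireOne {Y : Type*} [TopologicalSpace Y] (f : Y → ℝ) : Prop :=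
  ∃ (M : ℝ) (g : ℕ → Y → ℝ), (∀ n, Continuous (g n)) ∧ (∀ n y, |g n y| ≤ M) ∧
    ∀ y, Tendsto (fun n => g n y) atTop (𝓝 (f y))

namespace IsBoundedBaireOne

section Topology

variable {Y Z : Type*} [TopologicalSpace Y] [TopologicalSpace Z] {f f' : Y → ℝ}

theorem of_continuous [CompactSpace Y] (hf : Continuous f) : IsBoundedBaireOne f := by
  obtain ⟨M, hM⟩ := isCompact_univ.exists_bound_of_continuousOn hf.continuousOn
  exact ⟨M, fun _ => f, fun _ => hf, fun _ y => hM y (Set.mem_univ y), fun _ => tendsto_const_nhds⟩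

theorem add (hf : IsBoundedBaireOne f) (hf' : IsBoundedBaireOne f') :
    IsBoundedBaireOne fun y => f y + f' y := by
  obtain ⟨M, g, hg, hgM, hgf⟩ := hf
  obtain ⟨M', g', hg', hgM', hgf'⟩ := hf'
  exact ⟨M + M', fun n y => g n y + g' n y, fun n => (hg n).add (hg' n),
    fun n y => (abs_add_le _ _).trans (add_le_add (hgM n y) (hgM' n y)),
    fun y => (hgf y).add (hgf' y)⟩

theorem const_mul (hf : IsBoundedBaireOne f) (r : ℝ) : IsBoundedBaireOne fun y => r * f y := by
  obtain ⟨M, g, hg, hgM, hgf⟩ := hf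
  refine ⟨|r| * M, fun n y => r * g n y, fun n => (hg n).const_mul r, fun n y => ?_,
    fun y => (hgf y).const_mul r⟩
  rw [abs_mul]
  exact mul_le_mul_of_nonneg_left (hgM n y) (abs_nonneg r)

theorem comp_continuous (hf : IsBoundedBaireOne f) {φ : Z → Y} (hφ : Continuous φ) :
    IsBoundedBaireOne fun z => f (φ z) := by
  obtain ⟨M, g, hg, hgM, hgf⟩ := hf
  exact ⟨M, fun n z => g n (φ z), fun n => (hg n).comp hφ, fun n z => hgM n (φ z),
    fun z => hgf (φ z)⟩

theorem exists_abs_le (hf : IsBoundedBaireOne f) : ∃ M, ∀ y, |f y| ≤ M := by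
  obtain ⟨M, g, -, hgM, hgf⟩ := hf
  exact ⟨M, fun y => le_of_tendsto' (hgf y).abs fun n => hgM n y⟩

theorem measurable [MeasurableSpace Y] [OpensMeasurableSpace Y] (hf : IsBoundedBaireOne f) :
    Measurable f := by
  obtain ⟨M, g, hg, -, hgf⟩ := hf
  exact measurable_of_tendsto_metrizable (fun n => (hg n).measurable) (tendsto_pi_nhds.2 hgf)

theorem integral_prod_right [FirstCountableTopology Z] [MeasurableSpace Y] [OpensMeasurableSpace Y]
    {f : Z × Y → ℝ} (hf : IsBoundedBaireOne f) (m : Measure Y) [IsFiniteMeasure m] :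
    IsBoundedBaireOne fun z => ∫ y, f (z, y) ∂m := by
  obtain ⟨M, g, hg, hgM, hgf⟩ := hf
  have hmeas : ∀ n z, AEStronglyMeasurable (fun y => g n (z, y)) m := fun n z =>
    ((hg n).comp (Continuous.prodMk_right z)).aestronglyMeasurable
  have hbound : ∀ n z, ∀ᵐ y ∂m, ‖g n (z, y)‖ ≤ M := fun n z => ae_of_all m fun y => hgM n (z, y)
  refine ⟨M * m.real Set.univ, fun n z => ∫ y, g n (z, y) ∂m, fun n => ?_, fun n z =>
    norm_integral_le_of_norm_le_const (hbound n z), fun z => ?_⟩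
  · exact continuous_of_dominated (hmeas n) (hbound n) (integrable_const M)
      (ae_of_all m fun y => (hg n).comp (Continuous.prodMk_left y))
  · exact tendsto_integral_of_dominated_convergence (fun _ => M) (fun n => hmeas n z)
      (integrable_const M) (fun n => hbound n z) (ae_of_all m fun y => hgf (z, y))

end Topology

/-- The strict sublevel sets of a Baire one function are `F_σ`, and projections along a compact
factor preserve `F_σ` sets of a compact space. -/
theorem measurable_iInf {X B : Type*} [TopologicalSpace X] [T2Space X] [CompactSpace X]
    [MeasurableSpace X] [OpensMeasurableSpace X] [TopologicalSpace B] [CompactSpace B] [Nonempty B]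
    {f : X × B → ℝ} (hf : IsBoundedBaireOne f) : Measurable fun x => ⨅ a, f (x, a) := by
  obtain ⟨M, hM⟩ := hf.exists_abs_le
  obtain ⟨-, g, hg, -, hgf⟩ := hf
  have hbdd : ∀ x, BddBelow (Set.range fun a => f (x, a)) := fun x =>
    ⟨-M, Set.forall_mem_range.2 fun a => (abs_le.1 (hM (x, a))).1⟩
  refine measurable_of_Iio fun r => ?_
  have hsublevel : (fun x => ⨅ a, f (x, a)) ⁻¹' Set.Iio r =
      ⋃ m : ℕ, ⋃ k : ℕ, Prod.fst '' ⋂ n : ℕ, ⋂ _ : k ≤ n, {q | g n q ≤ r - 1 / (m + 1 : ℝ)} := by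
    ext x
    simp only [Set.mem_preimage, Set.mem_Iio, ciInf_lt_iff (hbdd x), Set.mem_iUnion, Set.mem_image,
      Set.mem_iInter, Set.mem_ofPred_eq, Prod.exists, exists_and_right, exists_eq_right]
    constructor
    · rintro ⟨a, ha⟩
      obtain ⟨m, hm⟩ := exists_nat_one_div_lt (sub_pos.2 ha)
      obtain ⟨k, hk⟩ := eventually_atTop.1 ((hgf (x, a)).eventually_le_const (lt_sub_comm.1 hm))
      exact ⟨m, k, a, hk⟩
    · rintro ⟨m, k, a, hk⟩
      have hle : f (x, a) ≤ r - 1 / (m + 1 : ℝ) :=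
        le_of_tendsto (hgf (x, a)) (eventually_atTop.2 ⟨k, hk⟩)
      exact ⟨a, hle.trans_lt (sub_lt_self r Nat.one_div_pos_of_nat)⟩
  rw [hsublevel]
  refine MeasurableSet.iUnion fun m => MeasurableSet.iUnion fun k => IsClosed.measurableSet
    (IsCompact.isClosed (IsCompact.image ?_ continuous_fst))
  exact (isClosed_iInter fun n => isClosed_iInter fun _ =>
    isClosed_le (hg n) continuous_const).isCompact

end IsBoundedBaireOne

section Exhaustion

variable {X : Type*} [MeasurableSpace X]

theorem exists_measurableSet_ae_maximal (μ : Measure X) [IsFiniteMeasure μ] {C : Set X → Prop}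
    (hC_empty : C ∅) (hC_iUnion : ∀ s : ℕ → Set X, (∀ n, C (s n)) → C (⋃ n, s n)) :
    ∃ E, MeasurableSet E ∧ C E ∧ ∀ F, MeasurableSet F → C F → μ (F \ E) = 0 := by
  have hne : (μ.real '' {F | MeasurableSet F ∧ C F}).Nonempty :=
    ⟨_, ∅, ⟨MeasurableSet.empty, hC_empty⟩, rfl⟩
  have hbdd : BddAbove (μ.real '' {F | MeasurableSet F ∧ C F}) :=
    ⟨μ.real Set.univ, Set.forall_mem_image.2 fun F _ => measureReal_mono F.subset_univ⟩
  obtain ⟨u, -, hu_lim, hu⟩ := exists_seq_tendsto_sSup hne hbdd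
  choose s hs hsu using hu
  have hE : MeasurableSet (⋃ n, s n) := MeasurableSet.iUnion fun n => (hs n).1
  refine ⟨⋃ n, s n, hE, hC_iUnion s fun n => (hs n).2, fun F hF hCF => ?_⟩
  have hC_union : C (F ∪ ⋃ n, s n) := by
    have hC := hC_iUnion (fun n => n.casesOn F s) fun n => by cases n <;> simp [hCF, (hs _).2]
    rwa [← Set.union_iUnion_nat_succ] at hC
  have hle : μ.real (F ∪ ⋃ n, s n) ≤ μ.real (⋃ n, s n) :=
    calc μ.real (F ∪ ⋃ n, s n) ≤ sSup (μ.real '' {F | MeasurableSet F ∧ C F}) :=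
          le_csSup hbdd ⟨_, ⟨hF.union hE, hC_union⟩, rfl⟩
      _ ≤ μ.real (⋃ n, s n) :=
          le_of_tendsto' hu_lim fun n => hsu n ▸ measureReal_mono (Set.subset_iUnion s n)
  have hdiff : μ.real (F \ ⋃ n, s n) = μ.real (F ∪ ⋃ n, s n) - μ.real (⋃ n, s n) := by
    rw [← Set.union_sdiff_right, measureReal_sdiff Set.subset_union_right hE]
  rw [← measureReal_eq_zero_iff, hdiff]
  exact le_antisymm (sub_nonpos.2 hle) (hdiff ▸ measureReal_nonneg)

theorem exists_measurableSet_aemeasurable_restrict (μ : Measure X) [IsFiniteMeasure μ]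
    {Y : Type*} [MeasurableSpace Y] (f : X → Y) :
    ∃ E, MeasurableSet E ∧ AEMeasurable f (μ.restrict E) ∧
      ∀ ν, ν ≪ μ → AEMeasurable f ν → ν Eᶜ = 0 := by
  obtain ⟨E, hE, hfE, hmax⟩ := exists_measurableSet_ae_maximal μ
    (C := fun s => AEMeasurable f (μ.restrict s)) (by simp)
    fun s hs => aemeasurable_iUnion_iff.2 hs
  refine ⟨E, hE, hfE, fun ν hν hf => ?_⟩
  obtain ⟨Z, hfZ, hZ, hνZ⟩ := exists_measurable_superset_of_null (ae_iff.1 hf.ae_eq_mk)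
  have hfZc : AEMeasurable f (μ.restrict Zᶜ) := by
    refine ⟨hf.mk f, hf.measurable_mk, ?_⟩
    filter_upwards [ae_restrict_mem hZ.compl] with x hx
    exact not_not.1 fun hne => hx (hfZ hne)
  refine measure_mono_null (t := Z ∪ Zᶜ \ E) (fun x hx => ?_)
    (measure_union_null hνZ (hν (hmax _ hZ.compl hfZc)))
  by_cases hxZ : x ∈ Z
  exacts [Or.inl hxZ, Or.inr ⟨hxZ, hx⟩]

end Exhaustion

/-- Setwise continuity of a family of measures, the regularity assumed of the transition law of the
game: the measure of every measurable set depends continuously on the parameter. -/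
def IsSetwiseContinuous {X Y : Type*} [MeasurableSpace X] [TopologicalSpace Y]
    (P : Y → Measure X) : Prop :=
  ∀ D, MeasurableSet D → Continuous fun q => (P q).real D

namespace IsSetwiseContinuous

variable {X Y : Type*} [MeasurableSpace X] [TopologicalSpace Y] {P : Y → Measure X}
  [∀ q, IsProbabilityMeasure (P q)] {f : X → ℝ} {K : ℝ}

/-- By the layer cake formula the integral is a superposition of the continuous functions
`q ↦ P q {x | t ≤ f x + K}`. -/
theorem continuous_integral [FirstCountableTopology Y] (hP : IsSetwiseContinuous P)
    (hf : Measurable f) (hK : ∀ x, |f x| ≤ K) : Continuous fun q => ∫ x, f x ∂P q := by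
  have hint : ∀ q, Integrable f (P q) := fun q =>
    .of_bound hf.aestronglyMeasurable K (ae_of_all _ hK)
  have hlayer : ∀ q,
      ∫ x, f x ∂P q = (∫ t in Set.Ioc 0 (2 * K), (P q).real {x | t ≤ f x + K}) - K := by
    intro q
    have hshift := ((hint q).add (integrable_const K)).integral_eq_integral_Ioc_meas_le (M := 2 * K)
      (ae_of_all _ fun x => neg_le_iff_add_nonneg.1 (abs_le.1 (hK x)).1)
      (ae_of_all _ fun x => (add_le_add_left (abs_le.1 (hK x)).2 K).trans_eq (two_mul K).symm)
    simp only [Pi.add_apply, integral_add (hint q) (integrable_const K), integral_const,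
      probReal_univ, one_smul] at hshift
    exact eq_sub_of_add_eq hshift
  simp only [hlayer]
  refine (continuous_of_dominated (bound := fun _ => 1) (fun q => ?_) (fun q => ?_)
    (integrable_const 1) ?_).sub continuous_const
  · refine (Antitone.measurable fun s t hst => ?_).aestronglyMeasurable
    exact measureReal_mono fun x hx => hst.trans hx
  · exact ae_of_all _ fun t => by simp [abs_of_nonneg]
  · exact ae_of_all _ fun t => hP _ (measurableSet_le measurable_const (hf.add_const K))

theorem exists_absolutelyContinuous [TopologicalSpace.SeparableSpace Y]
    (hP : IsSetwiseContinuous P) : ∃ μ : Measure X, IsFiniteMeasure μ ∧ ∀ q, P q ≪ μ := by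
  rcases isEmpty_or_nonempty Y with hY | hY
  · exact ⟨0, inferInstance, fun q => (hY.false q).elim⟩
  obtain ⟨μ, hμ, hle, -⟩ := exists_isFiniteMeasure_absolutelyContinuous
    (Measure.sum fun n => P (TopologicalSpace.denseSeq Y n))
  refine ⟨μ, hμ, fun q => Measure.AbsolutelyContinuous.mk fun D hD hD0 => ?_⟩
  have hzero := Measure.sum_apply_eq_zero.1 (hle hD0)
  have hreal : (fun q => (P q).real D) = fun _ => 0 :=
    (hP D hD).ext_on (TopologicalSpace.denseRange_denseSeq Y) continuous_const <| by
      rintro _ ⟨n, rfl⟩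
      simp [Measure.real, hzero n]
  exact (measureReal_eq_zero_iff (μ := P q)).1 (congrFun hreal q)

/-- `f` need not be measurable, so the integral may take its junk value `0`. This happens exactly
off the closed set `{q | P q E = 1}` for a suitable `E`, and `(P q E) ^ n` converges to the
indicator of that set. -/
theorem isBoundedBaireOne_integral [FirstCountableTopology Y] [TopologicalSpace.SeparableSpace Y]
    (hP : IsSetwiseContinuous P) (hK : ∀ x, |f x| ≤ K) :
    IsBoundedBaireOne fun q => ∫ x, f x ∂P q := by
  rcases isEmpty_or_nonempty Y with hY | ⟨⟨q₀⟩⟩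
  · exact ⟨0, fun _ => hY.elim, fun _ => continuous_of_discreteTopology, fun _ => hY.elim, hY.elim⟩
  obtain ⟨x₀⟩ := (P q₀).nonempty_of_neZero
  obtain ⟨μ, _, hμ⟩ := hP.exists_absolutelyContinuous
  obtain ⟨E, hE, hfE, hE_max⟩ := exists_measurableSet_aemeasurable_restrict μ f
  obtain ⟨g, hg, hgK, hfg⟩ := hfE.exists_ae_eq_range_subset (t := Set.Icc (-K) K)
    (ae_of_all _ fun x => abs_le.1 (hK x)) ⟨f x₀, abs_le.1 (hK x₀)⟩
  replace hgK : ∀ x, |g x| ≤ K := fun x => abs_le.2 (hgK ⟨x, rfl⟩)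
  refine ⟨K, fun n q => (∫ x, g x ∂P q) * (P q).real E ^ n, fun n =>
    (hP.continuous_integral hg hgK).mul ((hP E hE).pow n), fun n q => ?_, fun q => ?_⟩
  · have hint_le : |∫ x, g x ∂P q| ≤ K := abs_integral_le_of_ae_abs_le (ae_of_all _ hgK)
    rw [abs_mul, abs_of_nonneg (pow_nonneg measureReal_nonneg n)]
    exact (mul_le_of_le_one_right (abs_nonneg _)
      (pow_le_one₀ measureReal_nonneg measureReal_le_one)).trans hint_le
  by_cases hq : P q Eᶜ = 0
  · have hE_one : (P q).real E = 1 := by simp [Measure.real, (prob_compl_eq_zero_iff hE).1 hq]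
    have hfg_q : f =ᵐ[P q] g := by
      rw [← Measure.restrict_eq_self_of_ae_mem (mem_ae_iff.2 hq)]
      exact ((hμ q).restrict E).ae_le hfg
    simp [hE_one, integral_congr_ae hfg_q]
  · have hf_not : ¬ Integrable f (P q) := fun hf => hq (hE_max _ (hμ q) hf.aemeasurable)
    have hE_lt : (P q).real E < 1 := by
      have hE_compl : (P q).real Eᶜ ≠ 0 := mt (measureReal_eq_zero_iff (μ := P q)).1 hq
      rw [probReal_compl_eq_one_sub hE] at hE_compl
      exact lt_of_le_of_ne measureReal_le_one fun h => hE_compl (sub_eq_zero.2 h.symm)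
    simpa [integral_undef hf_not] using
      (tendsto_pow_atTop_nhds_zero_of_lt_one measureReal_nonneg hE_lt).const_mul (∫ x, g x ∂P q)

end IsSetwiseContinuous

section TotalVariation

variable {α : Type*} [MeasurableSpace α] {μ ν : Measure α}

theorem two_mul_abs_measureReal_sub_le_tvDist [IsFiniteMeasure μ] [IsFiniteMeasure ν] {D : Set α}
    (hD : MeasurableSet D) : 2 * |μ.real D - ν.real D| ≤ tvDist μ ν := by
  refine mul_le_mul_of_nonneg_left (le_ciSup (f := fun D : {D : Set α // MeasurableSet D} =>
    |μ.real D.1 - ν.real D.1|) ⟨μ.real Set.univ + ν.real Set.univ, ?_⟩ ⟨D, hD⟩) zero_le_two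
  rintro _ ⟨D, rfl⟩
  calc |μ.real D.1 - ν.real D.1| ≤ |μ.real D.1| + |ν.real D.1| := abs_sub _ _
    _ ≤ μ.real Set.univ + ν.real Set.univ := by
      simpa only [abs_of_nonneg measureReal_nonneg] using
        add_le_add (measureReal_mono (Set.subset_univ _)) (measureReal_mono (Set.subset_univ _))

theorem tvDist_le_two [IsProbabilityMeasure μ] [IsProbabilityMeasure ν] : tvDist μ ν ≤ 2 := by
  have hsup : ⨆ D : {D : Set α // MeasurableSet D}, |μ.real D.1 - ν.real D.1| ≤ 1 :=
    ciSup_le fun D => abs_sub_le_of_nonneg_of_le measureReal_nonneg measureReal_le_one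
      measureReal_nonneg measureReal_le_one
  exact (mul_le_mul_of_nonneg_left hsup zero_le_two).trans_eq (mul_one 2)

theorem abs_integral_sub_integral_le_of_le [IsFiniteMeasure ν] (hμν : μ ≤ ν) {f : α → ℝ}
    (hf : Measurable f) {K : ℝ} (hK : ∀ x, |f x| ≤ K) :
    |∫ x, f x ∂μ - ∫ x, f x ∂ν| ≤ K * (ν.real Set.univ - μ.real Set.univ) := by
  have hfν : Integrable f ν := .of_bound hf.aestronglyMeasurable K (ae_of_all _ hK)
  have hfμ : Integrable f μ := hfν.mono_measure hμν
  have := isFiniteMeasure_of_le ν hμν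
  have hadd : ∫ x, (K + f x) ∂μ ≤ ∫ x, (K + f x) ∂ν :=
    integral_mono_measure hμν (ae_of_all _ fun x => neg_le_iff_add_nonneg'.1 (abs_le.1 (hK x)).1)
      ((integrable_const K).add hfν)
  have hsub : ∫ x, (K - f x) ∂μ ≤ ∫ x, (K - f x) ∂ν :=
    integral_mono_measure hμν (ae_of_all _ fun x => sub_nonneg.2 (abs_le.1 (hK x)).2)
      ((integrable_const K).sub hfν)
  simp only [integral_add (integrable_const K) hfμ, integral_add (integrable_const K) hfν,
    integral_const, smul_eq_mul] at hadd
  simp only [integral_sub (integrable_const K) hfμ, integral_sub (integrable_const K) hfν,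
    integral_const, smul_eq_mul] at hsub
  exact abs_le.2 ⟨by linarith, by linarith⟩

theorem abs_integral_sub_integral_le_mul_tvDist [IsFiniteMeasure μ] [IsFiniteMeasure ν] {f : α → ℝ}
    (hf : Measurable f) {K : ℝ} (hK : ∀ x, |f x| ≤ K) :
    |∫ x, f x ∂μ - ∫ x, f x ∂ν| ≤ K * tvDist μ ν := by
  rcases isEmpty_or_nonempty α with hα | ⟨⟨x₀⟩⟩
  · simp [Measure.eq_zero_of_isEmpty μ, Measure.eq_zero_of_isEmpty ν, tvDist]
  have hK0 : 0 ≤ K := (abs_nonneg _).trans (hK x₀)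
  have hfin : ∀ (m : Measure α) [IsFiniteMeasure m], Integrable f m := fun m _ =>
    .of_bound hf.aestronglyMeasurable K (ae_of_all _ hK)
  obtain ⟨s, hs⟩ := exists_isHahnDecomposition μ ν
  have hhalf : ∀ {D : Set α}, MeasurableSet D → |μ.real D - ν.real D| ≤ tvDist μ ν / 2 :=
    fun hD => (le_div_iff₀' two_pos).2 (two_mul_abs_measureReal_sub_le_tvDist hD)
  have hon : |∫ x in s, f x ∂μ - ∫ x in s, f x ∂ν| ≤ K * (tvDist μ ν / 2) := by
    refine (abs_integral_sub_integral_le_of_le hs.le_on hf hK).trans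
      (mul_le_mul_of_nonneg_left ?_ hK0)
    simpa using (neg_le_abs _).trans (hhalf hs.measurableSet)
  have hoff : |∫ x in sᶜ, f x ∂μ - ∫ x in sᶜ, f x ∂ν| ≤ K * (tvDist μ ν / 2) := by
    rw [abs_sub_comm]
    refine (abs_integral_sub_integral_le_of_le hs.ge_on_compl hf hK).trans
      (mul_le_mul_of_nonneg_left ?_ hK0)
    simpa using (le_abs_self _).trans (hhalf hs.measurableSet.compl)
  rw [← integral_add_compl hs.measurableSet (hfin μ),
    ← integral_add_compl hs.measurableSet (hfin ν), add_sub_add_comm]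
  calc _ ≤ K * (tvDist μ ν / 2) + K * (tvDist μ ν / 2) :=
        (abs_add_le _ _).trans (add_le_add hon hoff)
    _ = K * tvDist μ ν := by ring

theorem abs_integral_sub_integral_le_mul_tvDist_map [IsFiniteMeasure μ] [IsFiniteMeasure ν]
    {Q : α → α} (hQ : Measurable Q) {f : α → ℝ} (hf : Measurable f) (hfQ : ∀ x, f (Q x) = f x)
    {K : ℝ} (hK : ∀ x, |f x| ≤ K) :
    |∫ x, f x ∂μ - ∫ x, f x ∂ν| ≤ K * tvDist (μ.map Q) (ν.map Q) := by
  have hmap : ∀ m : Measure α, ∫ x, f x ∂m = ∫ x, f x ∂m.map Q := fun m => by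
    simp only [integral_map hQ.aemeasurable hf.aestronglyMeasurable, hfQ]
  rw [hmap μ, hmap ν]
  exact abs_integral_sub_integral_le_mul_tvDist hf hK

end TotalVariation

theorem measurable_quantized_apply {X W : Type*} [MeasurableSpace X] [MeasurableSingletonClass X]
    [MeasurableSpace W] {S : Set X} (hS : S.Countable) {Q : X → X} (hQ : Measurable Q)
    (hQS : ∀ x, Q x ∈ S) {F : X → X → W} (hF : ∀ z ∈ S, Measurable (F z)) :
    Measurable fun x => F (Q x) x := by
  have := hS.to_subtype
  have hprod : Measurable fun q : X × S => F q.2 q.1 :=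
    measurable_from_prod_countable_left fun z => hF z z.2
  exact hprod.comp (measurable_id.prodMk (hQ.subtype_mk (h := hQS)))

theorem le_div_one_sub_of_forall_le_imp_le_mul_add {X : Type*} {D : X → ℝ} {β e : ℝ} (hβ : β < 1)
    (hD : BddAbove (Set.range D)) (hstep : ∀ s, (∀ x, D x ≤ s) → ∀ x, D x ≤ β * s + e) (x : X) :
    D x ≤ e / (1 - β) := by
  have : Nonempty X := ⟨x⟩
  have hsup : ⨆ x, D x ≤ β * (⨆ x, D x) + e := ciSup_le (hstep _ (le_ciSup hD))
  refine (le_ciSup hD x).trans ((le_div_iff₀ (sub_pos.2 hβ)).2 ?_)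
  linarith

section StateActionCost

/-- The state-action cost of a continuation value `J`: the one-stage cost of `b` at `x` plus the
discounted expectation of `J` at the next state. -/
def stateActionCost {X B : Type*} [MeasurableSpace X] (c : X → B → ℝ) (β : ℝ)
    (p : X → B → Measure X) (J : X → ℝ) (x : X) (b : B) : ℝ :=
  c x b + β * ∫ y, J y ∂p x b

variable {X B : Type*} [MeasurableSpace X] {c : X → B → ℝ} {β : ℝ} {p : X → B → Measure X}
  [∀ x b, IsProbabilityMeasure (p x b)] {J V : X → ℝ} {s : ℝ}

theorem abs_stateActionCost_le (hβ : 0 ≤ β) {C : ℝ} (hC : ∀ x b, |c x b| ≤ C)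
    (hJ : ∀ x, |J x| ≤ s) (x : X) (b : B) : |stateActionCost c β p J x b| ≤ C + β * s := by
  have hint : |∫ y, J y ∂p x b| ≤ s := abs_integral_le_of_ae_abs_le (ae_of_all _ hJ)
  calc |stateActionCost c β p J x b| ≤ |c x b| + |β * ∫ y, J y ∂p x b| := abs_add_le _ _
    _ ≤ C + β * s := by
      rw [abs_mul, abs_of_nonneg hβ]
      exact add_le_add (hC x b) (mul_le_mul_of_nonneg_left hint hβ)

theorem stateActionCost_le_add_mul (hβ : 0 ≤ β) {x : X} {b : B} (hV : Integrable V (p x b))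
    (hJ : Integrable J (p x b)) (hVJ : ∀ y, V y ≤ J y + s) :
    stateActionCost c β p V x b ≤ stateActionCost c β p J x b + β * s := by
  have hint : ∫ y, V y ∂p x b ≤ ∫ y, J y ∂p x b + s :=
    calc ∫ y, V y ∂p x b ≤ ∫ y, (J y + s) ∂p x b :=
          integral_mono hV (hJ.add (integrable_const s)) hVJ
      _ = ∫ y, J y ∂p x b + s := by simp [integral_add hJ (integrable_const s)]
  rw [stateActionCost, stateActionCost, add_assoc, ← mul_add]
  exact add_le_add_right (mul_le_mul_of_nonneg_left hint hβ) _

variable [TopologicalSpace X] [FirstCountableTopology X] [TopologicalSpace B]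
  [FirstCountableTopology B] {K K' : ℝ}

theorem continuous_stateActionCost (hc : Continuous fun q : X × B => c q.1 q.2)
    (hp : IsSetwiseContinuous fun q : X × B => p q.1 q.2) (hJ : Measurable J)
    (hJK : ∀ x, |J x| ≤ K) : Continuous fun q : X × B => stateActionCost c β p J q.1 q.2 :=
  hc.add ((hp.continuous_integral hJ hJK).const_mul β)

theorem isBoundedBaireOne_stateActionCost [CompactSpace X] [TopologicalSpace.SeparableSpace X]
    [CompactSpace B] [TopologicalSpace.SeparableSpace B]
    (hc : Continuous fun q : X × B => c q.1 q.2)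
    (hp : IsSetwiseContinuous fun q : X × B => p q.1 q.2) (hJK : ∀ x, |J x| ≤ K) :
    IsBoundedBaireOne fun q : X × B => stateActionCost c β p J q.1 q.2 :=
  (IsBoundedBaireOne.of_continuous hc).add ((hp.isBoundedBaireOne_integral hJK).const_mul β)

theorem le_add_div_of_subsolution_of_supersolution [MeasurableSpace B] [OpensMeasurableSpace B]
    [CompactSpace B] {A : Type*} [Nonempty A] (hβ0 : 0 ≤ β) (hβ1 : β < 1)
    (hc : Continuous fun q : X × B => c q.1 q.2)
    (hp : IsSetwiseContinuous fun q : X × B => p q.1 q.2)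
    {κ : X → A → Measure B} [∀ x a, IsProbabilityMeasure (κ x a)] {e e' : ℝ}
    (hV_meas : Measurable V) (hV_bound : ∀ x, |V x| ≤ K)
    (hV : ∀ x a, V x ≤ ∫ b, stateActionCost c β p V x b ∂κ x a + e)
    (hJ_meas : Measurable J) (hJ_bound : ∀ x, |J x| ≤ K')
    (hJ : ∀ x, ⨅ a, ∫ b, stateActionCost c β p J x b ∂κ x a ≤ J x + e') (x : X) :
    V x ≤ J x + (e + e') / (1 - β) := by
  have hint {W : X → ℝ} {L : ℝ} (hW : Measurable W) (hWL : ∀ x, |W x| ≤ L) (m : Measure X)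
      [IsFiniteMeasure m] : Integrable W m := .of_bound hW.aestronglyMeasurable L (ae_of_all _ hWL)
  have hint_cost {W : X → ℝ} {L : ℝ} (hW : Measurable W) (hWL : ∀ x, |W x| ≤ L) (x : X) (a : A) :
      Integrable (stateActionCost c β p W x) (κ x a) :=
    ((continuous_stateActionCost hc hp hW hWL).comp
      (Continuous.prodMk_right x)).integrable_of_hasCompactSupport (.of_compactSpace _)
  refine sub_le_iff_le_add'.1 (le_div_one_sub_of_forall_le_imp_le_mul_add
    (D := fun x => V x - J x) hβ1 ⟨K + K', ?_⟩ (fun s hs x => ?_) x)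
  · rintro _ ⟨x, rfl⟩
    exact (le_abs_self _).trans ((abs_sub _ _).trans (add_le_add (hV_bound x) (hJ_bound x)))
  have hstep : V x - (β * s + e) ≤ ⨅ a, ∫ b, stateActionCost c β p J x b ∂κ x a := by
    refine le_ciInf fun a => sub_le_iff_le_add.2 ((hV x a).trans ?_)
    calc ∫ b, stateActionCost c β p V x b ∂κ x a + e
        ≤ ∫ b, (stateActionCost c β p J x b + β * s) ∂κ x a + e := by
          refine add_le_add_left (integral_mono (hint_cost hV_meas hV_bound x a)
            ((hint_cost hJ_meas hJ_bound x a).add (integrable_const _)) fun b => ?_) e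
          exact stateActionCost_le_add_mul hβ0 (hint hV_meas hV_bound _)
            (hint hJ_meas hJ_bound _) fun y => sub_le_iff_le_add'.1 (hs y)
      _ = ∫ b, stateActionCost c β p J x b ∂κ x a + (β * s + e) := by
          simp [integral_add (hint_cost hJ_meas hJ_bound x a) (integrable_const _), add_assoc]
  linarith [hJ x]

end StateActionCost

section Update

variable {ι : Type*} [Fintype ι] [DecidableEq ι] {A : ι → Type*}

theorem dist_update_update_le [∀ i, PseudoMetricSpace (A i)] (b : ∀ i, A i) (i : ι) (a a' : A i) :
    dist (Function.update b i a) (Function.update b i a') ≤ dist a a' := by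
  refine (dist_pi_le_iff dist_nonneg).2 fun j => ?_
  rcases eq_or_ne j i with rfl | hj
  · simp
  · simp [hj]

variable [∀ i, MeasurableSpace (A i)] (μ : ∀ i, Measure (A i)) [∀ i, IsProbabilityMeasure (μ i)]
  (i : ι)

instance isProbabilityMeasure_update_dirac (a : A i) (j : ι) :
    IsProbabilityMeasure (Function.update μ i (Measure.dirac a) j) := by
  rcases eq_or_ne j i with rfl | hj
  · simpa using Measure.dirac.isProbabilityMeasure
  · simpa [hj] using ‹∀ i, IsProbabilityMeasure (μ i)› j

theorem pi_update_dirac_eq_map (a : A i) :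
    Measure.pi (Function.update μ i (Measure.dirac a)) =
      (Measure.pi μ).map fun b => Function.update b i a := by
  let φ : ∀ j, A j → A j := Function.update (fun _ => id) i fun _ => a
  have hφ_meas : ∀ j, Measurable (φ j) := fun j => by
    rcases eq_or_ne j i with rfl | hj <;> simp [φ, *, measurable_id]
  have hφ_apply : (fun (b : ∀ j, A j) j => φ j (b j)) = fun b => Function.update b i a := by
    funext b j
    rcases eq_or_ne j i with rfl | hj <;> simp [φ, *]
  have hφ_map : (fun j => (μ j).map (φ j)) = Function.update μ i (Measure.dirac a) := by
    funext j
    rcases eq_or_ne j i with rfl | hj <;> simp [φ, *]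
  have := fun j => Measure.isProbabilityMeasure_map (μ := μ j) (hφ_meas j).aemeasurable
  rw [← hφ_apply, ← hφ_map, Measure.pi_map_pi fun j => (hφ_meas j).aemeasurable]

theorem integral_pi_update_dirac (a : A i) {f : (∀ i, A i) → ℝ} (hf : Measurable f) :
    ∫ b, f b ∂Measure.pi (Function.update μ i (Measure.dirac a)) =
      ∫ b, f (Function.update b i a) ∂Measure.pi μ := by
  rw [pi_update_dirac_eq_map, integral_map measurable_update_left.aemeasurable
    hf.aestronglyMeasurable]

theorem integral_pi_update_dirac_le_add [∀ j, TopologicalSpace (A j)] [∀ j, CompactSpace (A j)]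
    [OpensMeasurableSpace (∀ j, A j)] {f : (∀ j, A j) → ℝ} (hf : Continuous f) {a a' : A i} {e : ℝ}
    (hfe : ∀ b, f (Function.update b i a) ≤ f (Function.update b i a') + e) :
    ∫ b, f b ∂Measure.pi (Function.update μ i (Measure.dirac a)) ≤
      ∫ b, f b ∂Measure.pi (Function.update μ i (Measure.dirac a')) + e := by
  have hint (a : A i) : Integrable (fun b => f (Function.update b i a)) (Measure.pi μ) :=
    (hf.comp (by fun_prop)).integrable_of_hasCompactSupport (.of_compactSpace _)
  rw [integral_pi_update_dirac μ i a hf.measurable, integral_pi_update_dirac μ i a' hf.measurable]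
  calc ∫ b, f (Function.update b i a) ∂Measure.pi μ
      ≤ ∫ b, (f (Function.update b i a') + e) ∂Measure.pi μ :=
        integral_mono (hint a) ((hint a').add (integrable_const e)) hfe
    _ = ∫ b, f (Function.update b i a') ∂Measure.pi μ + e := by
        simp [integral_add (hint a') (integrable_const e)]

end Update

section Quantization

variable {X : Type*} [MeasurableSpace X] {ν : Measure X} {Q : X → X} {z : X}

theorem isProbabilityMeasure_cellMeasure [IsFiniteMeasure ν] (hz : 0 < ν (Q ⁻¹' {z})) :
    IsProbabilityMeasure (cellMeasure ν Q z) :=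
  ProbabilityTheory.cond_isProbabilityMeasure hz.ne'

theorem ae_cellMeasure_eq [MeasurableSingletonClass X] (hQ : Measurable Q) :
    ∀ᵐ y ∂cellMeasure ν Q z, Q y = z :=
  Measure.ae_smul_measure (ae_restrict_mem (hQ (measurableSet_singleton z))) _

/-- A quantizer of the state space with finite range in `S`. Rather than requiring `Q x` to be a
nearest point of a `δ`-net, only its consequence `dist x (Q x) ≤ δ` is recorded. -/
structure IsQuantizer [PseudoMetricSpace X] (Q : X → X) (S : Finset X) (δ : ℝ) : Prop where
  measurable : Measurable Q
  mem : ∀ x, Q x ∈ S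
  dist_le : ∀ x, dist x (Q x) ≤ δ

theorem IsQuantizer.dist_le_two_mul [PseudoMetricSpace X] {S : Finset X} {δ : ℝ}
    (hQ : IsQuantizer Q S δ) {x y : X} (hxy : Q x = Q y) : dist x y ≤ 2 * δ :=
  calc dist x y ≤ dist x (Q x) + dist y (Q y) := hxy ▸ dist_triangle_right x y (Q x)
    _ ≤ 2 * δ := (add_le_add (hQ.dist_le x) (hQ.dist_le y)).trans_eq (two_mul δ).symm

theorem abs_integral_integral_sub_le {B : Type*} [TopologicalSpace X] [CompactSpace X]
    [SecondCountableTopology X] [OpensMeasurableSpace X] [TopologicalSpace B] [CompactSpace B]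
    [MeasurableSpace B] [OpensMeasurableSpace B] {κ : Measure X} [IsProbabilityMeasure κ]
    {m : Measure B} [IsProbabilityMeasure m] {G : X → B → ℝ}
    (hG : Continuous fun q : X × B => G q.1 q.2) {x : X} {e : ℝ}
    (h : ∀ᵐ y ∂κ, ∀ b, |G y b - G x b| ≤ e) :
    |∫ y, ∫ b, G y b ∂m ∂κ - ∫ b, G x b ∂m| ≤ e := by
  have hint_left : ∀ y, Integrable (G y) m := fun y =>
    (hG.comp (Continuous.prodMk_right y)).integrable_of_hasCompactSupport (.of_compactSpace _)
  have hint : Integrable (fun y => ∫ b, G y b ∂m) κ :=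
    (hG.integrable_of_hasCompactSupport (μ := κ.prod m) (.of_compactSpace _)).integral_prod_left
  have hinner : ∀ᵐ y ∂κ, |∫ b, G y b ∂m - ∫ b, G x b ∂m| ≤ e := by
    filter_upwards [h] with y hy
    rw [← integral_sub (hint_left y) (hint_left x)]
    exact abs_integral_le_of_ae_abs_le (ae_of_all m hy)
  simpa [integral_sub hint (integrable_const _)] using abs_integral_le_of_ae_abs_le hinner

theorem IsQuantizer.abs_integral_cellMeasure_sub_le [MetricSpace X] [CompactSpace X] [BorelSpace X]
    {B : Type*} [TopologicalSpace B] [CompactSpace B] [MeasurableSpace B] [OpensMeasurableSpace B]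
    [IsFiniteMeasure ν] {m : Measure B} [IsProbabilityMeasure m] {S : Finset X} {δ : ℝ}
    (hQ : IsQuantizer Q S δ) {x : X} (hν : 0 < ν (Q ⁻¹' {Q x})) {G : X → B → ℝ}
    (hG : Continuous fun q : X × B => G q.1 q.2) {e : ℝ}
    (hosc : ∀ x y b, dist x y ≤ 2 * δ → |G x b - G y b| ≤ e) :
    |∫ y, ∫ b, G y b ∂m ∂cellMeasure ν Q (Q x) - ∫ b, G x b ∂m| ≤ e := by
  have := isProbabilityMeasure_cellMeasure hν
  refine abs_integral_integral_sub_le hG ?_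
  filter_upwards [ae_cellMeasure_eq hQ.measurable] with y hy b
  exact hosc y x b (hQ.dist_le_two_mul hy)

/-- The modulus `ω_δ(r)` of total variation continuity of the transition law quantized by
`Q = Q_δ`. -/
def quantizedModulus {B : Type*} [PseudoMetricSpace X] [PseudoMetricSpace B]
    (p : X → B → Measure X) (Q : X → X) (r : ℝ) : ℝ :=
  sSup {v : ℝ | ∃ x y : X, ∃ a b : B, dist x y + dist a b ≤ r ∧
    v = tvDist ((p x a).map Q) ((p y b).map Q)}

theorem tvDist_map_le_quantizedModulus {B : Type*} [PseudoMetricSpace X] [PseudoMetricSpace B]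
    {p : X → B → Measure X} [∀ x b, IsProbabilityMeasure (p x b)] (hQ : Measurable Q) {x y : X}
    {a b : B} {r : ℝ} (hr : dist x y + dist a b ≤ r) :
    tvDist ((p x a).map Q) ((p y b).map Q) ≤ quantizedModulus p Q r := by
  have := fun x b => Measure.isProbabilityMeasure_map (μ := p x b) hQ.aemeasurable
  refine le_csSup ⟨2, ?_⟩ ⟨x, y, a, b, hr, rfl⟩
  rintro _ ⟨x, y, a, b, -, rfl⟩
  exact tvDist_le_two

theorem eventually_abs_stateActionCost_sub_le [PseudoMetricSpace X] [CompactSpace X] {B : Type*}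
    [PseudoMetricSpace B] [CompactSpace B] {c : X → B → ℝ} {β : ℝ} {p : X → B → Measure X}
    [∀ x b, IsProbabilityMeasure (p x b)] (hβ : 0 ≤ β) (hc : Continuous fun q : X × B => c q.1 q.2)
    {Q : ℝ → X → X} (hQ : ∀ δ > 0, Measurable (Q δ))
    (hquant : Tendsto (fun δ => quantizedModulus p (Q δ) (2 * δ)) (𝓝[>] 0) (𝓝 0))
    (K : ℝ) {e : ℝ} (he : 0 < e) :
    ∀ᶠ δ in 𝓝[>] 0, ∀ V : X → ℝ, Measurable V → (∀ x, V (Q δ x) = V x) → (∀ x, |V x| ≤ K) →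
      ∀ x y a b, dist x y + dist a b ≤ 2 * δ →
        |stateActionCost c β p V x a - stateActionCost c β p V y b| ≤ e := by
  obtain ⟨η, hη, hc_unif⟩ := Metric.uniformContinuous_iff.1
    (CompactSpace.uniformContinuous_of_continuous hc) (e / 2) (half_pos he)
  have hmodulus : ∀ᶠ δ in 𝓝[>] 0, β * (K * quantizedModulus p (Q δ) (2 * δ)) ≤ e / 2 := by
    refine ((hquant.const_mul K).const_mul β).eventually_le_const ?_
    simpa using half_pos he
  filter_upwards [hmodulus, Ioo_mem_nhdsGT (half_pos hη)] with δ hδ_modulus ⟨hδ, hδη⟩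
    V hV hVQ hVK x y a b hxy
  have hK : 0 ≤ K := (abs_nonneg _).trans (hVK x)
  have hcost : |c x a - c y b| ≤ e / 2 := by
    refine (hc_unif (a := (x, a)) (b := (y, b)) (max_lt ?_ ?_)).le <;>
      linarith [dist_nonneg (x := x) (y := y), dist_nonneg (x := a) (y := b)]
  have htrans : |∫ w, V w ∂p x a - ∫ w, V w ∂p y b| ≤ K * quantizedModulus p (Q δ) (2 * δ) :=
    (abs_integral_sub_integral_le_mul_tvDist_map (hQ δ hδ) hV hVQ hVK).trans
      (mul_le_mul_of_nonneg_left (tvDist_map_le_quantizedModulus (hQ δ hδ) hxy) hK)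
  calc |stateActionCost c β p V x a - stateActionCost c β p V y b|
      = |(c x a - c y b) + β * (∫ w, V w ∂p x a - ∫ w, V w ∂p y b)| := by
        simp only [stateActionCost]
        congr 1
        ring
    _ ≤ |c x a - c y b| + β * |∫ w, V w ∂p x a - ∫ w, V w ∂p y b| := by
        refine (abs_add_le _ _).trans_eq ?_
        rw [abs_mul, abs_of_nonneg hβ]
    _ ≤ e / 2 + e / 2 :=
        add_le_add hcost ((mul_le_mul_of_nonneg_left htrans hβ).trans hδ_modulus)
    _ = e := add_halves e

end Quantization

section Game

variable {ι : Type*} [Fintype ι] {X : Type*} [MeasurableSpace X] {A : ι → Type*}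
  [∀ j, MeasurableSpace (A j)] {c : X → (∀ j, A j) → ℝ} {β : ℝ}
  {p : X → (∀ j, A j) → Measure X} {Q : X → X} {S : Finset X} {δ : ℝ}
  {π : ∀ j, X → Measure (A j)} {J : X → ℝ}

/-- `J` is the discounted cost `J^i(π; ·)` of a player with one-stage cost `c` when all players
follow the stationary policy profile `π`. -/
structure IsPolicyValue (c : X → (∀ j, A j) → ℝ) (β : ℝ) (p : X → (∀ j, A j) → Measure X)
    (π : ∀ j, X → Measure (A j)) (J : X → ℝ) : Prop where
  bounded : ∃ M, ∀ x, |J x| ≤ M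
  eq_integral : ∀ x, J x = ∫ b, stateActionCost c β p J x b ∂Measure.pi fun j => π j x

section Policy

variable [MetricSpace X] [CompactSpace X] [BorelSpace X] [∀ j, MetricSpace (A j)]
  [∀ j, CompactSpace (A j)] [∀ j, BorelSpace (A j)] [∀ x b, IsProbabilityMeasure (p x b)]
  [∀ j x, IsProbabilityMeasure (π j x)]

theorem IsPolicyValue.measurable (hJ : IsPolicyValue c β p π J)
    (hc : Continuous fun q : X × (∀ j, A j) => c q.1 q.2)
    (hp : IsSetwiseContinuous fun q : X × (∀ j, A j) => p q.1 q.2) (hQ : IsQuantizer Q S δ)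
    (hπQ : ∀ j x, π j x = π j (Q x)) : Measurable J := by
  obtain ⟨M, hM⟩ := hJ.bounded
  have hF : ∀ z, Measurable fun x =>
      ∫ b, stateActionCost c β p J x b ∂Measure.pi fun j => π j z := fun z =>
    ((isBoundedBaireOne_stateActionCost hc hp hM).integral_prod_right _).measurable
  have heq : J = fun x => ∫ b, stateActionCost c β p J x b ∂Measure.pi fun j => π j (Q x) :=
    funext fun x => by simpa only [← hπQ] using hJ.eq_integral x
  rw [heq]
  exact measurable_quantized_apply S.countable_toSet hQ.measurable hQ.mem fun z _ => hF z

end Policy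

variable [DecidableEq ι]

/-- `J` is the discounted best-response value `J*(π^{-i}; ·)` of player `i`, whose one-stage cost
is `c`. A deviation to the pure action `a` is encoded by putting the Dirac mass at `a` in place of
`π i`. -/
structure IsBestResponseValue (c : X → (∀ j, A j) → ℝ) (β : ℝ) (p : X → (∀ j, A j) → Measure X)
    (π : ∀ j, X → Measure (A j)) (i : ι) (J : X → ℝ) : Prop where
  bounded : ∃ M, ∀ x, |J x| ≤ M
  eq_iInf : ∀ x, J x = ⨅ a : A i, ∫ b, stateActionCost c β p J x b
    ∂Measure.pi (Function.update (fun j => π j x) i (Measure.dirac a))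

section BestResponse

variable {i : ι} [MetricSpace X] [CompactSpace X] [∀ j, MetricSpace (A j)] [∀ j, CompactSpace (A j)]
  [∀ j, BorelSpace (A j)] [∀ x b, IsProbabilityMeasure (p x b)]
  [∀ j x, IsProbabilityMeasure (π j x)]

theorem integral_stateActionCost_pi_update_dirac
    (hc : Continuous fun q : X × (∀ j, A j) => c q.1 q.2)
    (hp : IsSetwiseContinuous fun q : X × (∀ j, A j) => p q.1 q.2) {M : ℝ} (hM : ∀ x, |J x| ≤ M)
    (x z : X) (a : A i) :
    ∫ b, stateActionCost c β p J x b
        ∂Measure.pi (Function.update (fun j => π j z) i (Measure.dirac a)) =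
      ∫ b, stateActionCost c β p J x (Function.update b i a) ∂Measure.pi fun j => π j z :=
  integral_pi_update_dirac (fun j => π j z) i a
    ((isBoundedBaireOne_stateActionCost hc hp hM).comp_continuous
      (Continuous.prodMk_right x)).measurable

theorem IsBestResponseValue.measurable [BorelSpace X] [Nonempty (A i)]
    (hJ : IsBestResponseValue c β p π i J)
    (hc : Continuous fun q : X × (∀ j, A j) => c q.1 q.2)
    (hp : IsSetwiseContinuous fun q : X × (∀ j, A j) => p q.1 q.2) (hQ : IsQuantizer Q S δ)
    (hπQ : ∀ j x, π j x = π j (Q x)) : Measurable J := by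
  obtain ⟨M, hM⟩ := hJ.bounded
  have hdeviate : Continuous fun q : (X × A i) × (∀ j, A j) =>
      (q.1.1, Function.update q.2 i q.1.2) := by fun_prop
  have hF : ∀ z, Measurable fun x => ⨅ a : A i, ∫ b, stateActionCost c β p J x b
      ∂Measure.pi (Function.update (fun j => π j z) i (Measure.dirac a)) := fun z => by
    simp only [integral_stateActionCost_pi_update_dirac hc hp hM]
    exact (((isBoundedBaireOne_stateActionCost hc hp hM).comp_continuous
      hdeviate).integral_prod_right _).measurable_iInf
  have heq : J = fun x => ⨅ a : A i, ∫ b, stateActionCost c β p J x b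
      ∂Measure.pi (Function.update (fun j => π j (Q x)) i (Measure.dirac a)) :=
    funext fun x => by simpa only [← hπQ] using hJ.eq_iInf x
  rw [heq]
  exact measurable_quantized_apply S.countable_toSet hQ.measurable hQ.mem fun z _ => hF z

end BestResponse

/-- `J` is the best-response value `J*_δ(π^{-i}; ·)` of player `i` in the finite model with states
`S`, actions `Ad` and weighting measure `ν`, and `π i` attains it. Policies and values are extended
from `S` to `X` along the quantizer `Q`. -/
structure IsFiniteModelEquilibriumValue (c : X → (∀ j, A j) → ℝ) (β : ℝ)
    (p : X → (∀ j, A j) → Measure X) (Q : X → X) (S : Finset X) (ν : Measure X)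
    (π : ∀ j, X → Measure (A j)) (i : ι) (Ad : Set (A i)) (J : X → ℝ) : Prop where
  eq_quantizer : ∀ x, J x = J (Q x)
  eq_sInf : ∀ z ∈ S, J z = sInf {v : ℝ | ∃ a ∈ Ad, v = ∫ x, ∫ b, stateActionCost c β p J x b
    ∂Measure.pi (Function.update (fun j => π j z) i (Measure.dirac a)) ∂cellMeasure ν Q z}
  eq_integral : ∀ z ∈ S, J z = ∫ x, ∫ b, stateActionCost c β p J x b
    ∂Measure.pi (fun j => π j z) ∂cellMeasure ν Q z

namespace IsFiniteModelEquilibriumValue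

variable {ν : Measure X} {i : ι} {Ad : Set (A i)}

section Bound

variable [PseudoMetricSpace X]

theorem measurable [MeasurableSingletonClass X]
    (hJ : IsFiniteModelEquilibriumValue c β p Q S ν π i Ad J) (hQ : IsQuantizer Q S δ) :
    Measurable J := by
  rw [funext hJ.eq_quantizer]
  exact measurable_quantized_apply (F := fun z _ => J z) S.countable_toSet hQ.measurable hQ.mem
    fun z _ => measurable_const

theorem bounded (hJ : IsFiniteModelEquilibriumValue c β p Q S ν π i Ad J)
    (hQ : IsQuantizer Q S δ) : ∃ M, ∀ x, |J x| ≤ M := by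
  obtain ⟨M, hM⟩ := (S.finite_toSet.image fun z => |J z|).bddAbove
  exact ⟨M, fun x => hJ.eq_quantizer x ▸ hM ⟨Q x, hQ.mem x, rfl⟩⟩

theorem abs_le_div_one_sub [∀ x b, IsProbabilityMeasure (p x b)]
    [∀ j x, IsProbabilityMeasure (π j x)]
    (hJ : IsFiniteModelEquilibriumValue c β p Q S ν π i Ad J) (hβ0 : 0 ≤ β) (hβ1 : β < 1)
    {C : ℝ} (hC : ∀ x b, |c x b| ≤ C) (hQ : IsQuantizer Q S δ) [IsFiniteMeasure ν]
    (hν : ∀ z ∈ S, 0 < ν (Q ⁻¹' {z})) (x : X) : |J x| ≤ C / (1 - β) := by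
  obtain ⟨M, hM⟩ := hJ.bounded hQ
  refine le_div_one_sub_of_forall_le_imp_le_mul_add (D := fun x => |J x|) hβ1
    ⟨M, Set.forall_mem_range.2 hM⟩ (fun s hs x => ?_) x
  have := isProbabilityMeasure_cellMeasure (hν _ (hQ.mem x))
  rw [hJ.eq_quantizer, hJ.eq_integral _ (hQ.mem x), add_comm]
  exact abs_integral_le_of_ae_abs_le (ae_of_all _ fun y =>
    abs_integral_le_of_ae_abs_le (ae_of_all _ fun b => abs_stateActionCost_le hβ0 hC hs y b))

end Bound

variable [MetricSpace X] [CompactSpace X] [BorelSpace X] [∀ j, MetricSpace (A j)]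
  [∀ j, CompactSpace (A j)] [∀ j, BorelSpace (A j)] [∀ j x, IsProbabilityMeasure (π j x)]
  [IsFiniteMeasure ν] {e : ℝ}

theorem abs_sub_integral_le (hJ : IsFiniteModelEquilibriumValue c β p Q S ν π i Ad J)
    (hQ : IsQuantizer Q S δ) (hν : ∀ z ∈ S, 0 < ν (Q ⁻¹' {z})) (hπQ : ∀ j x, π j x = π j (Q x))
    (hcont : Continuous fun q : X × (∀ j, A j) => stateActionCost c β p J q.1 q.2)
    (hosc : ∀ x y a b, dist x y + dist a b ≤ 2 * δ →
      |stateActionCost c β p J x a - stateActionCost c β p J y b| ≤ e) (x : X) :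
    |J x - ∫ b, stateActionCost c β p J x b ∂Measure.pi fun j => π j x| ≤ e := by
  rw [hJ.eq_quantizer, hJ.eq_integral _ (hQ.mem x)]
  simpa only [← hπQ] using
    hQ.abs_integral_cellMeasure_sub_le (hν _ (hQ.mem x)) (m := Measure.pi fun j => π j (Q x)) hcont
      fun x y b hxy => hosc x y b b (by simpa using hxy)

theorem le_integral_update_dirac_add (hJ : IsFiniteModelEquilibriumValue c β p Q S ν π i Ad J)
    (hQ : IsQuantizer Q S δ) (hν : ∀ z ∈ S, 0 < ν (Q ⁻¹' {z})) (hπQ : ∀ j x, π j x = π j (Q x))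
    (hAd : ∀ a, ∃ a' ∈ Ad, dist a a' ≤ δ)
    (hcont : Continuous fun q : X × (∀ j, A j) => stateActionCost c β p J q.1 q.2)
    (hosc : ∀ x y a b, dist x y + dist a b ≤ 2 * δ →
      |stateActionCost c β p J x a - stateActionCost c β p J y b| ≤ e) (x : X) (a : A i) :
    J x ≤ ∫ b, stateActionCost c β p J x b
      ∂Measure.pi (Function.update (fun j => π j x) i (Measure.dirac a)) + 2 * e := by
  have := isProbabilityMeasure_cellMeasure (hν _ (hQ.mem x))
  obtain ⟨a', ha', haa'⟩ := hAd a
  obtain ⟨K, hK⟩ := isCompact_univ.exists_bound_of_continuousOn hcont.continuousOn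
  have hclose (b : ∀ j, A j) : stateActionCost c β p J x (Function.update b i a') ≤
      stateActionCost c β p J x (Function.update b i a) + e := by
    refine sub_le_iff_le_add'.1 ((le_abs_self _).trans (hosc x x _ _ ?_))
    have hδ : 0 ≤ δ := dist_nonneg.trans haa'
    rw [dist_self, zero_add, two_mul]
    exact (dist_update_update_le b i a' a).trans ((dist_comm a' a).trans_le
      (haa'.trans (le_add_of_nonneg_left hδ)))
  calc J x ≤ ∫ y, ∫ b, stateActionCost c β p J y b
          ∂Measure.pi (Function.update (fun j => π j x) i (Measure.dirac a'))
          ∂cellMeasure ν Q (Q x) := by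
        rw [hJ.eq_quantizer, hJ.eq_sInf _ (hQ.mem x)]
        refine csInf_le ⟨-K, ?_⟩ ⟨a', ha', by simp only [← hπQ]⟩
        rintro _ ⟨a, -, rfl⟩
        exact neg_le_of_abs_le (abs_integral_le_of_ae_abs_le (ae_of_all _ fun y =>
          abs_integral_le_of_ae_abs_le (ae_of_all _ fun b => hK (y, b) (Set.mem_univ _))))
    _ ≤ ∫ b, stateActionCost c β p J x b
          ∂Measure.pi (Function.update (fun j => π j x) i (Measure.dirac a')) + e :=
        sub_le_iff_le_add'.1 ((le_abs_self _).trans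
          (hQ.abs_integral_cellMeasure_sub_le (hν _ (hQ.mem x)) hcont
            fun x y b hxy => hosc x y b b (by simpa using hxy)))
    _ ≤ ∫ b, stateActionCost c β p J x b
          ∂Measure.pi (Function.update (fun j => π j x) i (Measure.dirac a)) + e + e :=
        add_le_add_left (integral_pi_update_dirac_le_add _ i
          (hcont.comp (Continuous.prodMk_right x)) hclose) e
    _ = _ := by rw [two_mul, add_assoc]

theorem policyValue_le_bestResponseValue_add [∀ x b, IsProbabilityMeasure (p x b)]
    (hJ : IsFiniteModelEquilibriumValue c β p Q S ν π i Ad J) {Ji Js : X → ℝ}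
    (hJi : IsPolicyValue c β p π Ji) (hJs : IsBestResponseValue c β p π i Js)
    (hc : Continuous fun q : X × (∀ j, A j) => c q.1 q.2)
    (hp : IsSetwiseContinuous fun q : X × (∀ j, A j) => p q.1 q.2) (hβ0 : 0 ≤ β) (hβ1 : β < 1)
    (hQ : IsQuantizer Q S δ) (hν : ∀ z ∈ S, 0 < ν (Q ⁻¹' {z})) (hπQ : ∀ j x, π j x = π j (Q x))
    (hAd : ∀ a, ∃ a' ∈ Ad, dist a a' ≤ δ)
    (hosc : ∀ x y a b, dist x y + dist a b ≤ 2 * δ →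
      |stateActionCost c β p J x a - stateActionCost c β p J y b| ≤ e) (x : X) :
    Ji x ≤ Js x + 3 * e / (1 - β) := by
  have := (π i x).nonempty_of_neZero
  obtain ⟨K, hK⟩ := hJ.bounded hQ
  obtain ⟨Ki, hKi⟩ := hJi.bounded
  obtain ⟨Ks, hKs⟩ := hJs.bounded
  have hcont := continuous_stateActionCost (β := β) hc hp (hJ.measurable hQ) hK
  have hJi_le : Ji x ≤ J x + (0 + e) / (1 - β) := by
    refine le_add_div_of_subsolution_of_supersolution (A := Unit) hβ0 hβ1 hc hp
      (κ := fun x _ => Measure.pi fun j => π j x) (hJi.measurable hc hp hQ hπQ) hKi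
      (fun x _ => ?_) (hJ.measurable hQ) hK (fun x => ?_) x
    · exact ((hJi.eq_integral x).trans (add_zero _).symm).le
    · rw [ciInf_const]
      linarith [abs_le.1 (hJ.abs_sub_integral_le hQ hν hπQ hcont hosc x)]
  have hle_Js : J x ≤ Js x + (2 * e + 0) / (1 - β) :=
    le_add_div_of_subsolution_of_supersolution hβ0 hβ1 hc hp (hJ.measurable hQ) hK
      (hJ.le_integral_update_dirac_add hQ hν hπQ hAd hcont hosc)
      (hJs.measurable hc hp hQ hπQ) hKs
      (fun x => ((hJs.eq_iInf x).symm.trans (add_zero _).symm).le) x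
  calc Ji x ≤ Js x + (2 * e + 0) / (1 - β) + (0 + e) / (1 - β) := hJi_le.trans (by gcongr)
    _ = Js x + 3 * e / (1 - β) := by ring

end IsFiniteModelEquilibriumValue

end Game

theorem discounted_eps_nash_general {X : Type*} [MetricSpace X] [CompactSpace X] [MeasurableSpace X]
    [BorelSpace X] {ι : Type*} [Fintype ι] [DecidableEq ι] {A : ι → Type*}
    [∀ i, MetricSpace (A i)] [∀ i, CompactSpace (A i)] [∀ i, MeasurableSpace (A i)]
    [∀ i, BorelSpace (A i)] {c : ι → X → (∀ i, A i) → ℝ}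
    (hc : ∀ i, Continuous fun q : X × (∀ i, A i) => c i q.1 q.2)
    {p : X → (∀ i, A i) → Measure X} [∀ x a, IsProbabilityMeasure (p x a)]
    (hp : IsSetwiseContinuous fun q : X × (∀ i, A i) => p q.1 q.2) {β : ℝ} (hβ0 : 0 ≤ β)
    (hβ1 : β < 1) {S : ℝ → Finset X} {Q : ℝ → X → X} (hQ : ∀ δ > 0, IsQuantizer (Q δ) (S δ) δ)
    {Ad : ℝ → ∀ i, Set (A i)} (hAd : ∀ δ > 0, ∀ i a, ∃ a' ∈ Ad δ i, dist a a' ≤ δ)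
    {ν : ℝ → Measure X} (hν_finite : ∀ δ > 0, IsFiniteMeasure (ν δ))
    (hν_pos : ∀ δ > 0, ∀ z ∈ S δ, 0 < ν δ (Q δ ⁻¹' {z}))
    (hquant : Tendsto (fun δ => quantizedModulus p (Q δ) (2 * δ)) (𝓝[>] 0) (𝓝 0)) :
    ∀ ε > 0, ∃ δε > 0, ∀ δ, 0 < δ → δ ≤ δε →
      ∀ (π : ∀ i, X → Measure (A i)) (Jd Js Ji : ι → X → ℝ),
      (∀ i x, IsProbabilityMeasure (π i x)) → (∀ i x, π i x = π i (Q δ x)) →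
      (∀ i, IsFiniteModelEquilibriumValue (c i) β p (Q δ) (S δ) (ν δ) π i (Ad δ i) (Jd i)) →
      (∀ i, IsBestResponseValue (c i) β p π i (Js i)) → (∀ i, IsPolicyValue (c i) β p π (Ji i)) →
      ∀ i x, Ji i x ≤ Js i x + ε := by
  intro ε hε
  have hβ : 0 < 1 - β := sub_pos.2 hβ1
  choose C hC using fun i => isCompact_univ.exists_bound_of_continuousOn (hc i).continuousOn
  obtain ⟨δε, hδε, hosc⟩ := mem_nhdsGT_iff_exists_Ioc_subset.1 <| eventually_all.2 fun i =>
    eventually_abs_stateActionCost_sub_le hβ0 (hc i) (fun δ hδ => (hQ δ hδ).measurable) hquant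
      (C i / (1 - β)) (e := ε * (1 - β) / 3) (by positivity)
  refine ⟨δε, hδε, fun δ hδ hδ_le π Jd Js Ji hπ hπQ hJd hJs hJi i x => ?_⟩
  have := hν_finite δ hδ
  have hJd_le := (hJd i).abs_le_div_one_sub hβ0 hβ1 (fun x b => hC i (x, b) (Set.mem_univ _))
    (hQ δ hδ) (hν_pos δ hδ)
  have hJi_le := (hJd i).policyValue_le_bestResponseValue_add (hJi i) (hJs i) (hc i) hp hβ0 hβ1
    (hQ δ hδ) (hν_pos δ hδ) hπQ (hAd δ hδ i) (hosc ⟨hδ, hδ_le⟩ i (Jd i)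
      ((hJd i).measurable (hQ δ hδ)) (fun x => ((hJd i).eq_quantizer x).symm) hJd_le) x
  rwa [mul_div_cancel₀ _ three_ne_zero, mul_div_cancel_right₀ _ hβ.ne'] at hJi_le

/-- Discounted nonzero-sum Markov games: for every `ε > 0` there is `δ(ε) > 0` such that
for all `0 < δ ≤ δ(ε)`, any stationary perfect Nash equilibrium of the finite `δ`-model,
extended to `X` via the quantizer, is a stationary perfect `ε`-Nash equilibrium of the
original game. -/
theorem discounted_eps_nash
    -- compact metric state space
    (X : Type*) [MetricSpace X] [CompactSpace X] [Nonempty X]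
    [MeasurableSpace X] [BorelSpace X]
    -- compact metric action spaces of the N players
    (N : ℕ) (A : Fin N → Type*) [∀ i, MetricSpace (A i)] [∀ i, CompactSpace (A i)]
    [∀ i, Nonempty (A i)] [∀ i, MeasurableSpace (A i)] [∀ i, BorelSpace (A i)]
    -- bounded continuous one-stage cost functions
    (c : Fin N → X → (∀ i, A i) → ℝ)
    (hc : ∀ i, Continuous fun q : X × (∀ i, A i) => c i q.1 q.2)
    -- setwise continuous Borel stochastic kernel
    (p : X → (∀ i, A i) → Measure X)
    (hp_prob : ∀ x a, IsProbabilityMeasure (p x a))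
    (hp_meas : ∀ D : Set X, MeasurableSet D →
      Measurable fun q : X × (∀ i, A i) => p q.1 q.2 D)
    (hp_setwise : ∀ D : Set X, MeasurableSet D →
      Continuous fun q : X × (∀ i, A i) => (p q.1 q.2 D).toReal)
    -- discount factor
    (β : ℝ) (hβ0 : 0 < β) (hβ1 : β < 1)
    -- quantization data: finite δ-nets, nearest-point quantizer, weighting measures
    (Xd : ℝ → Finset X) (Q : ℝ → X → X) (Ad : ℝ → ∀ i, Finset (A i)) (ν : ℝ → Measure X)
    (hXd_net : ∀ δ > (0:ℝ), ∀ x : X, ∃ z ∈ Xd δ, dist x z ≤ δ)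
    (hQ_mem : ∀ δ > (0:ℝ), ∀ x, Q δ x ∈ Xd δ)
    (hQ_near : ∀ δ > (0:ℝ), ∀ x, ∀ z ∈ Xd δ, dist x (Q δ x) ≤ dist x z)
    (hQ_meas : ∀ δ > (0:ℝ), Measurable (Q δ))
    (hAd_net : ∀ δ > (0:ℝ), ∀ i, ∀ a : A i, ∃ b ∈ Ad δ i, dist a b ≤ δ)
    (hν_prob : ∀ δ > (0:ℝ), IsProbabilityMeasure (ν δ))
    (hν_pos : ∀ δ > (0:ℝ), ∀ z ∈ Xd δ, 0 < ν δ (Q δ ⁻¹' {z}))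
    -- the quantization condition `lim_{δ→0} ω_δ(2δ) = 0`
    (hquant : Tendsto
      (fun δ : ℝ => sSup {v : ℝ | ∃ x y : X, ∃ a b : ∀ i, A i,
        dist x y + dist a b ≤ 2 * δ ∧
        v = tvDist ((p x a).map (Q δ)) ((p y b).map (Q δ))})
      (𝓝[>] 0) (𝓝 0)) :
    -- conclusion: ε-Nash property of any finite-model stationary perfect equilibrium
    ∀ ε > (0:ℝ), ∃ δε > (0:ℝ), ∀ δ : ℝ, 0 < δ → δ ≤ δε →
      ∀ (π : (i : Fin N) → X → Measure (A i)) (Jd Js Ji : Fin N → X → ℝ),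
      -- π is an (extended) stationary policy profile of the finite δ-model
      (∀ i x, IsProbabilityMeasure (π i x)) →
      (∀ i x, π i x (Ad δ i) = 1) →
      (∀ i x, π i x = π i (Q δ x)) →
      -- Jd is the (extended) finite-model best-response value, and π is a stationary
      -- perfect Nash equilibrium of the finite δ-model: the minimum in the fixed-point
      -- equation is attained by π at every state of the net
      (∀ i x, Jd i x = Jd i (Q δ x)) →
      (∀ i, ∀ z ∈ Xd δ,
        Jd i z = sInf {v : ℝ | ∃ a ∈ Ad δ i, v =
          ∫ x, (∫ b, (c i x b + β * ∫ y, Jd i y ∂(p x b))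
              ∂(Measure.pi (Function.update (fun j => π j z) i (Measure.dirac a))))
            ∂(cellMeasure (ν δ) (Q δ) z)}) →
      (∀ i, ∀ z ∈ Xd δ,
        Jd i z =
          ∫ x, (∫ b, (c i x b + β * ∫ y, Jd i y ∂(p x b))
              ∂(Measure.pi fun j => π j z))
            ∂(cellMeasure (ν δ) (Q δ) z)) →
      -- Js is the (bounded) original-model discounted best-response value against
      -- the extended policies of the other players
      (∀ i, ∃ M : ℝ, ∀ x, |Js i x| ≤ M) →
      (∀ i, ∀ x : X,
        Js i x = ⨅ a : A i,
          ∫ b, (c i x b + β * ∫ y, Js i y ∂(p x b))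
            ∂(Measure.pi (Function.update (fun j => π j x) i (Measure.dirac a)))) →
      -- Ji is the (bounded) discounted cost of player i under the extended joint policy
      (∀ i, ∃ M : ℝ, ∀ x, |Ji i x| ≤ M) →
      (∀ i, ∀ x : X,
        Ji i x =
          ∫ b, (c i x b + β * ∫ y, Ji i y ∂(p x b))
            ∂(Measure.pi fun j => π j x)) →
      -- ε-Nash property
      ∀ i : Fin N, ∀ x : X, Ji i x ≤ Js i x + ε := by
  intro ε hε
  have hQ : ∀ δ > 0, IsQuantizer (Q δ) (Xd δ) δ := fun δ hδ =>
    ⟨hQ_meas δ hδ, hQ_mem δ hδ, fun x => by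
      obtain ⟨z, hz, hxz⟩ := hXd_net δ hδ x
      exact (hQ_near δ hδ x z hz).trans hxz⟩
  obtain ⟨δε, hδε, hδε_nash⟩ := discounted_eps_nash_general hc hp_setwise hβ0.le hβ1 hQ
    (Ad := fun δ i => Ad δ i) hAd_net (fun δ hδ => have := hν_prob δ hδ; inferInstance) hν_pos
    hquant ε hε
  exact ⟨δε, hδε, fun δ hδ hδ_le π Jd Js Ji hπ _ hπQ hJd_quantizer hJd_sInf hJd_integral hJs_bound
    hJs_iInf hJi_bound hJi_integral => hδε_nash δ hδ hδ_le π Jd Js Ji hπ hπQ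
      (fun i => ⟨hJd_quantizer i, hJd_sInf i, hJd_integral i⟩)
      (fun i => ⟨hJs_bound i, hJs_iInf i⟩) fun i => ⟨hJi_bound i, hJi_integral i⟩⟩

end
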